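/- arXiv:0910.3913 — 2 statements merged into one kernel-verified Lean document; each statement's English description precedes it below -/
import Mathlib

section
/- Let φ be a satisfiable set of assignments over a finite type V of propositional variables. Then the set Υ_φ of all variables dispensable w.r.t. φ equals the intersection of all maximal deselectable sets of variables of φ. -/
/-- A set of variables `X` is deselectable w.r.t. `φ` if some model of `φ`
assigns `false` to every variable in `X`. -/
def Deselectable {V : Type*} (φ : Set (V → Bool)) (X : Set V) : Prop :=
  ∃ α ∈ φ, ∀ v ∈ X, α v = false

/-- A variable `v` is dispensable w.r.t. `φ` if every deselectable set stays
deselectable after adding `v`. -/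
def Dispensable {V : Type*} (φ : Set (V → Bool)) (v : V) : Prop :=
  ∀ X : Set V, Deselectable φ X → Deselectable φ (X ∪ {v})

/-- A deselectable set `M` is maximal if no deselectable set strictly contains it. -/
def MaximalDeselectable {V : Type*} (φ : Set (V → Bool)) (M : Set V) : Prop :=
  Deselectable φ M ∧ ¬ ∃ M' : Set V, Deselectable φ M' ∧ M ⊂ M'

/-!
A maximal deselectable set absorbs every dispensable variable. Conversely, a variable lying in all
maximal deselectable sets can be added to any deselectable set `X` by passing to a maximal one above
`X`. Such a maximal set exists because the models of `φ` form a compact set, so that deselectability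
has finite character and the Teichmüller–Tukey lemma applies.
-/

section

variable {V : Type*} {φ : Set (V → Bool)} {X Y M : Set V} {v : V}

theorem Deselectable.subset (hY : Deselectable φ Y) (hXY : X ⊆ Y) : Deselectable φ X :=
  let ⟨α, hα, hαY⟩ := hY
  ⟨α, hα, fun v hv ↦ hαY v (hXY hv)⟩

theorem maximalDeselectable_iff_maximal :
    MaximalDeselectable φ M ↔ Maximal (Deselectable φ) M := by
  simp only [MaximalDeselectable, Set.maximal_iff_forall_ssuperset, not_exists, not_and']

theorem Dispensable.mem_of_maximalDeselectable (hv : Dispensable φ v)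
    (hM : MaximalDeselectable φ M) : v ∈ M :=
  (maximalDeselectable_iff_maximal.mp hM).mem_of_prop_insert
    (Set.union_singleton ▸ hv M hM.1)

theorem deselectable_iff_nonempty_inter_iInter :
    Deselectable φ X ↔ (φ ∩ ⋂ v : X, {α | α v = false}).Nonempty := by
  simp only [Deselectable, Set.Nonempty, Set.mem_inter_iff, Set.mem_iInter, Set.mem_ofPred_eq,
    Subtype.forall]

theorem isOfFiniteCharacter_deselectable (hφ : IsClosed φ) :
    Order.IsOfFiniteCharacter {X | Deselectable φ X} := by
  refine fun X ↦ ⟨fun hX Y hYX _ ↦ hX.subset hYX, fun hfin ↦ ?_⟩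
  have isClosed_false (v : X) : IsClosed {α : V → Bool | α v = false} :=
    isClosed_eq (continuous_apply (v : V)) continuous_const
  refine deselectable_iff_nonempty_inter_iInter.mpr <|
    hφ.isCompact.inter_iInter_nonempty _ isClosed_false fun u ↦ ?_
  obtain ⟨α, hα, hαu⟩ : Deselectable φ (Subtype.val '' (u : Set X)) :=
    hfin _ (Subtype.coe_image_subset X u) (u.finite_toSet.image _)
  exact ⟨α, hα, Set.mem_iInter₂.mpr fun v hv ↦ hαu v (Set.mem_image_of_mem _ hv)⟩

theorem Deselectable.exists_maximalDeselectable_superset (hφ : IsClosed φ)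
    (hX : Deselectable φ X) : ∃ M, X ⊆ M ∧ MaximalDeselectable φ M := by
  obtain ⟨M, hXM, hM⟩ := (isOfFiniteCharacter_deselectable hφ).exists_maximal hX
  exact ⟨M, hXM, maximalDeselectable_iff_maximal.mpr hM⟩

/-- Closed sets of assignments for the product topology are the model sets of arbitrary, possibly
infinite, sets of propositional formulas. -/
theorem dispensables_eq_sInter_maximal_deselectable_general (hφ : IsClosed φ) :
    {v | Dispensable φ v} = ⋂₀ {M : Set V | MaximalDeselectable φ M} := by
  ext v
  refine ⟨fun hv M hM ↦ hv.mem_of_maximalDeselectable hM, fun hv X hX ↦ ?_⟩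
  obtain ⟨M, hXM, hM⟩ := hX.exists_maximalDeselectable_superset hφ
  exact hM.1.subset (Set.union_subset hXM (Set.singleton_subset_iff.mpr (hv M hM)))

end

theorem dispensables_eq_sInter_maximal_deselectable
    {V : Type*} [Finite V] (φ : Set (V → Bool)) (hsat : φ.Nonempty) :
    {v | Dispensable φ v} = ⋂₀ {M : Set V | MaximalDeselectable φ M} :=
  dispensables_eq_sInter_maximal_deselectable_general φ.toFinite.isClosed
end

section
/- Let φ be a set of assignments over a finite type V of propositional variables and v ∈ V. Then v is dispensable w.r.t. φ if and only if v is assigned false in every minimal model of φ. -/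
/-- A model `α` of `φ` is minimal if no model of `φ` has a strictly smaller
true-set. -/
def MinimalModel {V : Type*} (φ : Set (V → Bool)) (α : V → Bool) : Prop :=
  α ∈ φ ∧ ¬ ∃ α' ∈ φ, {w | α' w = true} ⊂ {w | α w = true}

section

variable {V : Type*} {φ : Set (V → Bool)} {α β : V → Bool} {v : V}

theorem setOf_eq_true_ssubset_iff_lt : {w | α w = true} ⊂ {w | β w = true} ↔ α < β := by
  simp only [ssubset_iff_subset_not_subset, lt_iff_le_not_ge, Set.ofPred_subset_ofPred,
    Pi.le_def, Bool.le_iff_imp]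

theorem minimalModel_iff_minimal : MinimalModel φ α ↔ Minimal (· ∈ φ) α := by
  simp only [MinimalModel, setOf_eq_true_ssubset_iff_lt, minimal_iff_forall_lt,
    not_exists, not_and']

theorem exists_minimalModel_le_of_isWF (hφ : φ.IsWF) (hα : α ∈ φ) :
    ∃ β ≤ α, MinimalModel φ β := by
  have : WellFoundedLT φ := ⟨hφ⟩
  obtain ⟨β, hβα, hβ⟩ := exists_minimal_le_of_wellFoundedLT (fun _ : φ ↦ True) ⟨α, hα⟩ trivial
  exact ⟨β, hβα, minimalModel_iff_minimal.2 ⟨β.2, fun γ hγ ↦ hβ.2 (y := ⟨γ, hγ⟩) trivial⟩⟩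

theorem pi_bool_le_iff_forall_eq_false_imp :
    α ≤ β ↔ ∀ w, β w = false → α w = false := by
  simp only [Pi.le_def, Bool.le_iff_imp, ← Bool.not_eq_true, not_imp_not]

-- A model `α` deselects exactly the subsets of `{w | α w = false}`, so it suffices
-- to test the latter.
theorem dispensable_iff_forall_exists_le :
    Dispensable φ v ↔ ∀ α ∈ φ, ∃ β ∈ φ, β ≤ α ∧ β v = false := by
  constructor
  · intro hv α hα
    obtain ⟨β, hβ, hβX⟩ := hv {w | α w = false} ⟨α, hα, fun _ hw ↦ hw⟩
    have hβα : β ≤ α := pi_bool_le_iff_forall_eq_false_imp.2 fun w hw ↦ hβX w (Or.inl hw)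
    exact ⟨β, hβ, hβα, hβX v (Or.inr rfl)⟩
  · rintro h X ⟨α, hα, hαX⟩
    obtain ⟨β, hβ, hβα, hβv⟩ := h α hα
    have hβX : ∀ w ∈ X, β w = false := fun w hw ↦
      pi_bool_le_iff_forall_eq_false_imp.1 hβα w (hαX w hw)
    exact ⟨β, hβ, by rintro w (hw | rfl); exacts [hβX w hw, hβv]⟩

theorem dispensable_iff_false_in_all_minimal_models_general
    (hφ : ∀ α ∈ φ, ∃ β ≤ α, MinimalModel φ β) :
    Dispensable φ v ↔ ∀ α : V → Bool, MinimalModel φ α → α v = false := by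
  rw [dispensable_iff_forall_exists_le]
  constructor
  · intro h α hα
    obtain ⟨β, hβ, hβα, hβv⟩ := h α hα.1
    have hαβ : α = β := (minimalModel_iff_minimal.1 hα).eq_of_ge hβ hβα
    rwa [hαβ]
  · intro h α hα
    obtain ⟨β, hβα, hβ⟩ := hφ α hα
    exact ⟨β, hβ.1, hβα, h β hβ⟩

end

theorem dispensable_iff_false_in_all_minimal_models
    {V : Type*} [Finite V] (φ : Set (V → Bool)) (v : V) :
    Dispensable φ v ↔ ∀ α : V → Bool, MinimalModel φ α → α v = false :=
  dispensable_iff_false_in_all_minimal_models_general fun _ hα ↦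
    exists_minimalModel_le_of_isWF φ.toFinite.isWF hα
end
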